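/- In a finite-player game in normal form with bounded payoffs, the α-characteristic function (lower max-min value) is superadditive: for any two disjoint coalitions S, Q ⊆ ι, V^α(S ∪ Q) ≥ V^α(S) + V^α(Q). -/

import Mathlib

/-! The union `S ∪ Q` may let `S` play `a` and `Q` play `b`, where `a` and `b` are arbitrary plans of
the two coalitions. Against any reply `c` of the outsiders, the resulting profile is one that `S`
can face when it plays `a` and one that `Q` can face when it plays `b`, so by disjointness the total
payoff is at least the sum of the two guaranteed amounts. Taking the infimum over `c` and the
suprema over `a` and `b` gives the claim; bounded payoffs make all these extrema genuine. -/

open scoped BigOperators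

/-- Combine a tuple of controls for the coalition `S` with a tuple of controls for the
complementary coalition into a full strategy profile. -/
def glue {ι : Type*} [DecidableEq ι] {U : ι → Type*} (S : Finset ι)
    (a : ∀ i : {i // i ∈ S}, U i) (c : ∀ i : {i // i ∉ S}, U i) : ∀ i, U i :=
  fun i => if h : i ∈ S then a ⟨i, h⟩ else c ⟨i, h⟩

/-- The α-characteristic function (lower max-min value): the coalition `S` maximizes,
the complementary coalition minimizes, the total payoff of the members of `S`. -/
noncomputable def Valpha {ι : Type*} [DecidableEq ι] [Fintype ι] {U : ι → Type*} [∀ i, Nonempty (U i)]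
    (J : ι → (∀ i, U i) → ℝ) (S : Finset ι) : ℝ :=
  ⨆ a : ∀ i : {i // i ∈ S}, U i, ⨅ c : ∀ i : {i // i ∉ S}, U i,
    ∑ k ∈ S, J k (glue S a c)

lemma abs_sum_payoff_le {ι : Type*} {U : ι → Type*} (J : ι → (∀ i, U i) → ℝ)
    (M : ℝ) (hM : ∀ (i : ι) (u : ∀ i, U i), |J i u| ≤ M) (S : Finset ι) (u : ∀ i, U i) :
    |∑ k ∈ S, J k u| ≤ S.card * M := by
  calc |∑ k ∈ S, J k u| ≤ ∑ k ∈ S, |J k u| := Finset.abs_sum_le_sum_abs _ _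
    _ ≤ ∑ _k ∈ S, M := Finset.sum_le_sum fun k _ => hM k u
    _ = S.card * M := by simp

lemma bddBelow_payoff {ι : Type*} [DecidableEq ι] {U : ι → Type*} (J : ι → (∀ i, U i) → ℝ)
    (M : ℝ) (hM : ∀ (i : ι) (u : ∀ i, U i), |J i u| ≤ M) (S : Finset ι)
    (a : ∀ i : {i // i ∈ S}, U i) :
    BddBelow (Set.range fun c : ∀ i : {i // i ∉ S}, U i => ∑ k ∈ S, J k (glue S a c)) := by
  refine ⟨-(S.card * M), ?_⟩
  rintro _ ⟨c, rfl⟩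
  exact (abs_le.1 (abs_sum_payoff_le J M hM S _)).1

/-- A profile `u` in which `S` plays `a` is one of the profiles over which the infimum guaranteed
by `a` is taken. -/
lemma iInf_le_of_agree {ι : Type*} [DecidableEq ι] {U : ι → Type*} (J : ι → (∀ i, U i) → ℝ)
    (M : ℝ) (hM : ∀ (i : ι) (u : ∀ i, U i), |J i u| ≤ M) (S : Finset ι)
    (a : ∀ i : {i // i ∈ S}, U i) (u : ∀ i, U i) (hu : ∀ i : {i // i ∈ S}, u i = a i) :
    ⨅ c : ∀ i : {i // i ∉ S}, U i, ∑ k ∈ S, J k (glue S a c) ≤ ∑ k ∈ S, J k u := by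
  have hg : glue S a (fun i => u i) = u := by
    funext i
    by_cases h : i ∈ S
    · simpa [glue, h] using (hu ⟨i, h⟩).symm
    · simp [glue, h]
  have h := ciInf_le (bddBelow_payoff J M hM S a) (fun i => u i)
  rwa [hg] at h

lemma bddAbove_guarantee {ι : Type*} [DecidableEq ι] {U : ι → Type*} [∀ i, Nonempty (U i)]
    (J : ι → (∀ i, U i) → ℝ)
    (M : ℝ) (hM : ∀ (i : ι) (u : ∀ i, U i), |J i u| ≤ M) (S : Finset ι) :
    BddAbove (Set.range fun a : ∀ i : {i // i ∈ S}, U i =>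
      ⨅ c : ∀ i : {i // i ∉ S}, U i, ∑ k ∈ S, J k (glue S a c)) := by
  refine ⟨S.card * M, ?_⟩
  rintro _ ⟨a, rfl⟩
  exact (ciInf_le (bddBelow_payoff J M hM S a) (fun _ => Classical.arbitrary _)).trans
    (abs_le.1 (abs_sum_payoff_le J M hM S _)).2

/-- The α-characteristic function is superadditive. -/
theorem Valpha_superadditive {ι : Type*} [DecidableEq ι] [Fintype ι] [Nonempty ι]
    {U : ι → Type*} [∀ i, Nonempty (U i)]
    (J : ι → (∀ i, U i) → ℝ)
    (M : ℝ) (hM : ∀ (i : ι) (u : ∀ i, U i), |J i u| ≤ M)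
    (S Q : Finset ι) (hSQ : Disjoint S Q) :
    Valpha J S + Valpha J Q ≤ Valpha J (S ∪ Q) := by
  refine ciSup_add_ciSup_le fun a b => ?_
  -- The joint plan: `a` on `S`, `b` on `Q`.
  let d : ∀ i : {i // i ∈ S ∪ Q}, U i := fun i =>
    if h : (i : ι) ∈ S then a ⟨i, h⟩ else b ⟨i, (Finset.mem_union.1 i.2).resolve_left h⟩
  refine le_trans (le_ciInf fun c => ?_) (le_ciSup (bddAbove_guarantee J M hM (S ∪ Q)) d)
  rw [Finset.sum_union hSQ]
  refine add_le_add (iInf_le_of_agree J M hM S a _ ?_) (iInf_le_of_agree J M hM Q b _ ?_)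
  · rintro ⟨i, hi⟩
    simp [glue, d, hi]
  · rintro ⟨i, hi⟩
    have hS : i ∉ S := Finset.disjoint_right.1 hSQ hi
    simp [glue, d, hi, hS]
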